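/- arXiv:1503.05567 — 2 statements merged into one kernel-verified Lean document; each statement's English description precedes it below -/
import Mathlib

section
/- Let x^0, x^1, x^2, … ∈ ℝ^m be vectors with ‖x^i‖_2² ≤ B for all i, where B > 0, and for each k let X^{k−1} ∈ ℝ^{k×m} be the matrix with rows x^0,…,x^{k−1}. Let 𝒮 be any family of column index sets (for example, all unions of r groups of a fixed partition of {1,…,m}). Suppose that for some N' the matrix X^{N'−1} satisfies, for every T ∈ 𝒮 and every vector ν of matching dimension, c_*‖ν‖_2² ≤ ‖X^{N'−1}_{*T} ν‖_2²/N' ≤ c^*‖ν‖_2², where 0 < c_* < c^* < ∞. Let c > 1 be a constant. Then for every n' with N' < n' ≤ cN', and every T ∈ 𝒮 and ν, one has (c_*/c)‖ν‖_2² ≤ ‖X^{n'−1}_{*T} ν‖_2²/n' ≤ max(c^*, B)‖ν‖_2²; that is, X^{n'−1} satisfies the sparse Riesz condition with the same rank and spectrum bounds (c_*/c, max(c^*, B)). -/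
/-!
Passing from `N'` to `n'` rows adds `n' - N'` squares `⟨x^i, ν⟩²` to `‖Xν‖²`. They are nonnegative,
so the mean of the squares drops at most by the factor `n' / N' ≤ c`. By Cauchy–Schwarz they are at
most `B ‖ν‖²`, so the new mean is at most a weighted average of `c^* ‖ν‖²` and `B ‖ν‖²`.
-/

section Expect

open Finset
open scoped BigOperators

variable {ι K : Type*} [Semifield K] [LinearOrder K] [IsStrictOrderedRing K]
  {s t : Finset ι} {f : ι → K}

lemma expect_le_mul_expect_of_subset {c : K} (hst : s ⊆ t) (hf : ∀ i ∈ t, 0 ≤ f i)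
    (hc : (#t : K) ≤ c * #s) : 𝔼 i ∈ s, f i ≤ c * 𝔼 i ∈ t, f i := by
  obtain rfl | hs := s.eq_empty_or_nonempty
  · obtain rfl : t = ∅ := by simpa using hc
    simp
  have hs_pos : (0 : K) < #s := by exact_mod_cast hs.card_pos
  refine le_of_mul_le_mul_left ?_ hs_pos
  calc (#s : K) * 𝔼 i ∈ s, f i = ∑ i ∈ s, f i := card_mul_expect s f
    _ ≤ ∑ i ∈ t, f i := sum_le_sum_of_subset_of_nonneg hst fun i hi _ => hf i hi
    _ = #t * 𝔼 i ∈ t, f i := (card_mul_expect t f).symm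
    _ ≤ c * #s * 𝔼 i ∈ t, f i := mul_le_mul_of_nonneg_right hc (expect_nonneg hf)
    _ = #s * (c * 𝔼 i ∈ t, f i) := by ring

lemma expect_le_of_subset_of_expect_le {M : K} (hst : s ⊆ t) (hs : 𝔼 i ∈ s, f i ≤ M)
    (hf : ∀ i ∈ t, i ∉ s → f i ≤ M) : 𝔼 i ∈ t, f i ≤ M := by
  classical
  obtain rfl | ht := t.eq_empty_or_nonempty
  · rwa [subset_empty.1 hst] at hs
  have ht_pos : (0 : K) < #t := by exact_mod_cast ht.card_pos
  refine le_of_mul_le_mul_left ?_ ht_pos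
  have hsum_new : ∑ i ∈ t \ s, f i ≤ #(t \ s) * M := by
    rw [← nsmul_eq_mul]
    exact sum_le_card_nsmul _ _ _ fun i hi => hf i (mem_sdiff.1 hi).1 (mem_sdiff.1 hi).2
  calc (#t : K) * 𝔼 i ∈ t, f i = ∑ i ∈ t \ s, f i + ∑ i ∈ s, f i := by
        rw [card_mul_expect, sum_sdiff hst]
    _ ≤ #(t \ s) * M + #s * M := by
        rw [← card_mul_expect s f]
        gcongr
    _ = #t * M := by rw [← add_mul, ← Nat.cast_add, card_sdiff_add_card_eq_card hst]

end Expect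

section RieszBounds

open scoped BigOperators

variable {𝕜 E ι : Type*} [RCLike 𝕜] [SeminormedAddCommGroup E] [InnerProductSpace 𝕜 E]

variable (𝕜) in
/-- Riesz condition with spectrum bounds `a` and `b` for the design with rows `x i`, `i ∈ s`: on the
set `K` of vectors, `‖Xv‖² / #s` lies between `a ‖v‖²` and `b ‖v‖²`. The rows are vectors of an
inner product space and `‖Xv‖² / #s` is the mean of the squares `‖⟪x i, v⟫‖²`; the sparsity
pattern of the sparse Riesz condition is the choice of `K`. -/
def HasRieszBounds (x : ι → E) (s : Finset ι) (K : Set E) (a b : ℝ) : Prop :=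
  ∀ v ∈ K, a * ‖v‖ ^ 2 ≤ 𝔼 i ∈ s, ‖inner 𝕜 (x i) v‖ ^ 2 ∧
    𝔼 i ∈ s, ‖inner 𝕜 (x i) v‖ ^ 2 ≤ b * ‖v‖ ^ 2

lemma norm_inner_sq_le_of_norm_sq_le {u : E} {B : ℝ} (hu : ‖u‖ ^ 2 ≤ B) (v : E) :
    ‖inner 𝕜 u v‖ ^ 2 ≤ B * ‖v‖ ^ 2 :=
  calc ‖inner 𝕜 u v‖ ^ 2 ≤ (‖u‖ * ‖v‖) ^ 2 := by gcongr; exact norm_inner_le_norm u v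
    _ = ‖u‖ ^ 2 * ‖v‖ ^ 2 := mul_pow _ _ _
    _ ≤ B * ‖v‖ ^ 2 := by gcongr

theorem stmt2_general {x : ι → E} {s t : Finset ι} {K : Set E} {a b B c : ℝ}
    (h : HasRieszBounds 𝕜 x s K a b) (hs : s.Nonempty) (hst : s ⊆ t)
    (hc : (t.card : ℝ) ≤ c * s.card) (hx : ∀ i ∈ t, i ∉ s → ‖x i‖ ^ 2 ≤ B) :
    HasRieszBounds 𝕜 x t K (a / c) (max b B) := by
  intro v hv
  obtain ⟨hlow, hhigh⟩ := h v hv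
  constructor
  · have ht_pos : (0 : ℝ) < t.card := by exact_mod_cast (hs.mono hst).card_pos
    have hc_pos : 0 < c := pos_of_mul_pos_left (ht_pos.trans_le hc) s.card.cast_nonneg
    rw [div_mul_eq_mul_div, div_le_iff₀' hc_pos]
    exact hlow.trans (expect_le_mul_expect_of_subset hst (fun _ _ => sq_nonneg _) hc)
  · refine expect_le_of_subset_of_expect_le hst (hhigh.trans ?_) fun i hit his =>
      norm_inner_sq_le_of_norm_sq_le ((hx i hit his).trans (le_max_right b B)) v
    gcongr
    exact le_max_left b B

end RieszBounds

section SparseVectors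

open scoped BigOperators

variable {ι : Type*} [Fintype ι]

/-- The vectors whose support lies in a member of the family `𝒮` of index sets; the Riesz condition
on this set is the sparse Riesz condition over `𝒮`. -/
def sparseVectors (𝒮 : Set (Finset ι)) : Set (EuclideanSpace ℝ ι) :=
  {v | ∃ T ∈ 𝒮, ∀ j ∉ T, v j = 0}

lemma norm_inner_toLp_sq (u v : ι → ℝ) :
    ‖inner ℝ (WithLp.toLp 2 u) (WithLp.toLp 2 v)‖ ^ 2 = (∑ j, u j * v j) ^ 2 := by
  simp only [EuclideanSpace.inner_toLp_toLp, star_trivial, Real.norm_eq_abs, sq_abs, dotProduct,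
    mul_comm]

lemma expect_range_norm_inner_toLp_sq (x : ℕ → ι → ℝ) (n : ℕ) (v : ι → ℝ) :
    𝔼 i ∈ Finset.range n, ‖inner ℝ (WithLp.toLp 2 (x i)) (WithLp.toLp 2 v)‖ ^ 2 =
      (∑ i : Fin n, (∑ j, x i j * v j) ^ 2) / n := by
  simp only [norm_inner_toLp_sq, Finset.expect_eq_sum_div_card, Finset.card_range]
  rw [Fin.sum_univ_eq_sum_range fun i => (∑ j, x i j * v j) ^ 2]

lemma hasRieszBounds_sparseVectors_iff {x : ℕ → ι → ℝ} {n : ℕ} {𝒮 : Set (Finset ι)} {a b : ℝ} :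
    HasRieszBounds ℝ (fun i => WithLp.toLp 2 (x i)) (Finset.range n) (sparseVectors 𝒮) a b ↔
      ∀ T ∈ 𝒮, ∀ v : ι → ℝ, (∀ j ∉ T, v j = 0) →
        a * ∑ j, v j ^ 2 ≤ (∑ i : Fin n, (∑ j, x i j * v j) ^ 2) / n ∧
        (∑ i : Fin n, (∑ j, x i j * v j) ^ 2) / n ≤ b * ∑ j, v j ^ 2 := by
  simp only [← expect_range_norm_inner_toLp_sq]
  constructor
  · intro h T hT v hv
    simpa only [EuclideanSpace.real_norm_sq_eq] using h (WithLp.toLp 2 v) ⟨T, hT, hv⟩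
  · rintro h v ⟨T, hT, hv⟩
    simpa only [EuclideanSpace.real_norm_sq_eq] using h T hT v.ofLp hv

end SparseVectors

/-- **Proposition 2 (SRC propagation)**: if the design matrix built from the first `N'` rows
`x^0,…,x^{N'−1}` satisfies the sparse Riesz condition with spectrum bounds `(c_*, c^*)` over a
family `𝒮` of column index sets, and every row has `‖x^i‖₂² ≤ B`, then for every
`N' < n' ≤ cN'` the design matrix built from the first `n'` rows satisfies the SRC with
spectrum bounds `(c_*/c, max(c^*, B))`.  A vector "in ℝ^T" is modelled as a vector
supported on `T`. -/
theorem stmt2 (m : ℕ) (x : ℕ → Fin m → ℝ) (B : ℝ) (hB : 0 < B)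
    (hx : ∀ i : ℕ, ∑ j, x i j ^ 2 ≤ B)
    (clow chigh : ℝ) (hclow : 0 < clow) (hcc : clow < chigh)
    (N' : ℕ) (hN' : 0 < N')
    (𝒮 : Set (Finset (Fin m)))
    (hSRC : ∀ T ∈ 𝒮, ∀ ν : Fin m → ℝ, (∀ j ∉ T, ν j = 0) →
      clow * ∑ j, ν j ^ 2 ≤ (∑ i : Fin N', (∑ j, x (i : ℕ) j * ν j) ^ 2) / (N' : ℝ) ∧
      (∑ i : Fin N', (∑ j, x (i : ℕ) j * ν j) ^ 2) / (N' : ℝ) ≤ chigh * ∑ j, ν j ^ 2)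
    (c : ℝ) (hc : 1 < c) :
    ∀ n' : ℕ, N' < n' → (n' : ℝ) ≤ c * N' →
      ∀ T ∈ 𝒮, ∀ ν : Fin m → ℝ, (∀ j ∉ T, ν j = 0) →
        (clow / c) * ∑ j, ν j ^ 2 ≤ (∑ i : Fin n', (∑ j, x (i : ℕ) j * ν j) ^ 2) / (n' : ℝ) ∧
        (∑ i : Fin n', (∑ j, x (i : ℕ) j * ν j) ^ 2) / (n' : ℝ) ≤
          max chigh B * ∑ j, ν j ^ 2 :=
  fun _ hn hnc => hasRieszBounds_sparseVectors_iff.1 <|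
    stmt2_general (hasRieszBounds_sparseVectors_iff.2 hSRC) (by simpa using hN'.ne')
      (Finset.range_subset_range.2 hn.le) (by simpa using hnc)
      fun i _ _ => (EuclideanSpace.real_norm_sq_eq _).trans_le (hx i)
end

section
/- (Deterministic core of Theorem 1, part (2), as established in the appendix proof.) Fix integers N' ≥ 1 and n ≥ 2N', an integer p ≥ 3, reals σ > 0, d̄ ≥ 1, s* ≥ 1, and positive constants C_6, C_7, C_8, C_min, C_max, c_λ. Let θ ∈ ℝ^D be the true coefficient vector on a coordinate set of size D, let θ^{N'−1} ∈ ℝ^D be a prior mean, and let Σ_0 ∈ ℝ^{D×D} be symmetric positive definite. For each n' = N',…,n set λ_{n'} = c_λ σ d̄ √(n' log p), and suppose we are given: vectors θ̂^{n'} ∈ ℝ^D with ‖θ̂^{n'} − θ‖_2 ≤ C_6 σ d̄ √(s* (log p)/n'); symmetric matrices M_{n'} with (C_8/n')‖ν‖_2² ≤ ν^T M_{n'} ν ≤ (C_7/n')‖ν‖_2² for all ν; and symmetric matrices C_{n'} with C_min‖ν‖_2² ≤ ν^T C_{n'} ν ≤ C_max‖ν‖_2² for all ν. Define Σ̂_{n'}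 = σ² M_{n'} + λ_{n'}² M_{n'} C_{n'} M_{n'}, the posterior covariance Σ_n = [Σ_0^{-1} + Σ_{n'=N'}^n Σ̂_{n'}^{-1}]^{-1}, and the posterior mean θ^n = Σ_n [Σ_0^{-1} θ^{N'−1} + Σ_{n'=N'}^n Σ̂_{n'}^{-1} θ̂^{n'}]. Then there exist constants K_1, K_2 > 0, depending only on (C_6, C_7, C_8, C_min, C_max, c_λ), such that ‖θ^n − θ‖_2 ≤ K_1 σ d̄ √(s* (log p)/n) + K_2 σ² d̄² (log p) ‖Σ_0^{-1}‖_2 ‖θ^{N'−1} − θ‖_2 / n². -/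
/-!
The error of a precision-weighted mean is
`θ^n − θ = Σ_n (Σ₀⁻¹ (θ^{N'−1} − θ) + ∑ Σ̂_k⁻¹ (θ̂^k − θ))`, so it suffices to bound `‖Σ_n‖` and
`‖Σ̂_k⁻¹‖`. With `τ = σ² d̄² log p`, the eigenvalue bounds on `M_k` and `C_k` give
`a τ / k ≤ Σ̂_k ≤ b τ / k` in the Loewner order, where `a = c_λ² C_min C₈²` and
`b = C₇ / log 2 + c_λ² C_max C₇²`. Inverting, `‖Σ̂_k⁻¹‖ ≤ k / (a τ)`, and since `∑ k ≥ n² / 4` over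
`N' ≤ k ≤ n`, also `‖Σ_n‖ ≤ 4 b τ / n²`. As `‖θ̂^k − θ‖` is of order `1 / √k`, the sum of the errors
is of order `∑ √k ≤ n √n`, and multiplying out gives the two terms with `K₁ = 4 b C₆ / a` and
`K₂ = 4 b`.
-/

open Matrix

/-- Euclidean norm of a vector in `ℝ^d`. -/
noncomputable def vecNorm {d : ℕ} (v : Fin d → ℝ) : ℝ :=
  Real.sqrt (∑ k, v k ^ 2)

/-- Operator 2-norm of a square matrix: `sup {‖Mν‖₂ : ‖ν‖₂ = 1}`. -/
noncomputable def opNorm2 {d : ℕ} (M : Matrix (Fin d) (Fin d) ℝ) : ℝ :=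
  sSup {t : ℝ | ∃ ν : Fin d → ℝ, ∑ k, ν k ^ 2 = 1 ∧ t = vecNorm (M.mulVec ν)}

open scoped MatrixOrder Matrix.Norms.L2Operator

section LoewnerBounds

variable {A : Type*} [Ring A] [StarRing A] [PartialOrder A] [StarOrderedRing A] [Algebra ℝ A]

lemma isSelfAdjoint_of_algebraMap_le [StarModule ℝ A] {a : A} {α : ℝ}
    (h : algebraMap ℝ A α ≤ a) : IsSelfAdjoint a :=
  .of_ge h (.algebraMap A (.all α))

variable [TopologicalSpace A] [ContinuousFunctionalCalculus ℝ A IsSelfAdjoint]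
  [NonnegSpectrumClass ℝ A] {a M C : A} {α β m c : ℝ}

lemma sq_le_algebraMap_sq (ha : 0 ≤ a) (h : a ≤ algebraMap ℝ A β) :
    a ^ 2 ≤ algebraMap ℝ A (β ^ 2) := by
  have hspec := (le_algebraMap_iff_spectrum_le ha.isSelfAdjoint).1 h
  rw [← cfc_pow_id (R := ℝ) a 2 ha.isSelfAdjoint]
  exact cfc_le_algebraMap _ _ _ fun x hx ↦
    pow_le_pow_left₀ (spectrum_nonneg_of_nonneg ha hx) (hspec x hx) 2

variable [StarModule ℝ A]

lemma algebraMap_sq_le_sq (hα : 0 ≤ α) (h : algebraMap ℝ A α ≤ a) :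
    algebraMap ℝ A (α ^ 2) ≤ a ^ 2 := by
  have ha := isSelfAdjoint_of_algebraMap_le h
  rw [← cfc_pow_id (R := ℝ) a 2]
  have hspec := (algebraMap_le_iff_le_spectrum (a := a)).1 h
  exact algebraMap_le_cfc _ _ _ fun x hx ↦ pow_le_pow_left₀ hα (hspec x hx) 2

lemma algebraMap_le_conjugate (hm : 0 ≤ m) (hM : algebraMap ℝ A m ≤ M) (hc : 0 ≤ c)
    (hC : algebraMap ℝ A c ≤ C) : algebraMap ℝ A (c * m ^ 2) ≤ M * C * M :=
  calc algebraMap ℝ A (c * m ^ 2) = c • algebraMap ℝ A (m ^ 2) := by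
        rw [map_mul, Algebra.smul_def]
    _ ≤ c • M ^ 2 := by gcongr; exact algebraMap_sq_le_sq hm hM
    _ = M * algebraMap ℝ A c * M := by
        rw [← Algebra.commutes, mul_assoc, ← sq, Algebra.smul_def]
    _ ≤ M * C * M := IsSelfAdjoint.conjugate_le_conjugate hC (isSelfAdjoint_of_algebraMap_le hM)

lemma conjugate_le_algebraMap (hM₀ : 0 ≤ M) (hM : M ≤ algebraMap ℝ A m) (hc : 0 ≤ c)
    (hC : C ≤ algebraMap ℝ A c) : M * C * M ≤ algebraMap ℝ A (c * m ^ 2) :=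
  calc M * C * M ≤ M * algebraMap ℝ A c * M :=
        IsSelfAdjoint.conjugate_le_conjugate hC hM₀.isSelfAdjoint
    _ = c • M ^ 2 := by
        rw [← Algebra.commutes, mul_assoc, ← sq, Algebra.smul_def]
    _ ≤ c • algebraMap ℝ A (m ^ 2) := by gcongr; exact sq_le_algebraMap_sq hM₀ hM
    _ = algebraMap ℝ A (c * m ^ 2) := by rw [map_mul, Algebra.smul_def]

lemma isUnit_of_algebraMap_le (hα : 0 < α) (h : algebraMap ℝ A α ≤ a) : IsUnit a := by
  have ha := isSelfAdjoint_of_algebraMap_le h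
  rw [← spectrum.zero_notMem_iff ℝ]
  exact fun h₀ ↦ hα.not_ge ((algebraMap_le_iff_le_spectrum (a := a)).1 h 0 h₀)

lemma algebraMap_inv_le_ringInverse (hα : 0 < α) (h : algebraMap ℝ A α ≤ a)
    (h' : a ≤ algebraMap ℝ A β) : algebraMap ℝ A β⁻¹ ≤ Ring.inverse a := by
  have ha := isSelfAdjoint_of_algebraMap_le h
  have hlo := (algebraMap_le_iff_le_spectrum (a := a)).1 h
  have hhi := (le_algebraMap_iff_spectrum_le (a := a)).1 h'
  rw [← cfc_ringInverse_id (R := ℝ) a (isUnit_of_algebraMap_le hα h)]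
  exact algebraMap_le_cfc _ _ _ (fun x hx ↦ inv_anti₀ (hα.trans_le (hlo x hx)) (hhi x hx))
    (continuousOn_inv₀.mono fun x hx ↦ (hα.trans_le (hlo x hx)).ne')

end LoewnerBounds

lemma norm_ringInverse_le {A : Type*} [NormedRing A] [StarRing A] [PartialOrder A]
    [StarOrderedRing A] [NormedAlgebra ℝ A] [StarModule ℝ A]
    [IsometricContinuousFunctionalCalculus ℝ A IsSelfAdjoint] [NonnegSpectrumClass ℝ A]
    {a : A} {α : ℝ} (hα : 0 < α) (h : algebraMap ℝ A α ≤ a) : ‖Ring.inverse a‖ ≤ α⁻¹ := by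
  have ha := isSelfAdjoint_of_algebraMap_le h
  have hlo := (algebraMap_le_iff_le_spectrum (a := a)).1 h
  rw [← cfc_ringInverse_id (R := ℝ) a (isUnit_of_algebraMap_le hα h)]
  refine norm_cfc_le (inv_nonneg.2 hα.le) fun x hx ↦ ?_
  rw [norm_inv, Real.norm_of_nonneg (hα.le.trans (hlo x hx))]
  exact inv_anti₀ hα (hlo x hx)

section SimulatedCov

variable {A : Type*} [Ring A] [Algebra ℝ A]

/-- The covariance `Σ̂ = σ² M + λ² M C M` of the simulated Lasso estimator, where `M` is the inverse
Gram matrix and `C` the covariance of the simulated subgradients. -/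
def simulatedCov (σ lam : ℝ) (M C : A) : A :=
  σ ^ 2 • M + lam ^ 2 • (M * C * M)

variable [StarRing A] [PartialOrder A] [StarOrderedRing A] [StarModule ℝ A] [TopologicalSpace A]
  [ContinuousFunctionalCalculus ℝ A IsSelfAdjoint] [NonnegSpectrumClass ℝ A]
  {M C : A} {σ lam m c s t k : ℝ}

lemma algebraMap_le_simulatedCov (hm : 0 ≤ m) (hM : algebraMap ℝ A m ≤ M) (hc : 0 ≤ c)
    (hC : algebraMap ℝ A c ≤ C) :
    algebraMap ℝ A (lam ^ 2 * (c * m ^ 2)) ≤ simulatedCov σ lam M C :=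
  calc algebraMap ℝ A (lam ^ 2 * (c * m ^ 2)) = lam ^ 2 • algebraMap ℝ A (c * m ^ 2) := by
        rw [map_mul, Algebra.smul_def]
    _ ≤ lam ^ 2 • (M * C * M) := by gcongr; exact algebraMap_le_conjugate hm hM hc hC
    _ ≤ simulatedCov σ lam M C :=
        le_add_of_nonneg_left (smul_nonneg (sq_nonneg σ) ((algebraMap_nonneg A hm).trans hM))

lemma simulatedCov_le_algebraMap (hM₀ : 0 ≤ M) (hM : M ≤ algebraMap ℝ A m)
    (hc : 0 ≤ c) (hC : C ≤ algebraMap ℝ A c) :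
    simulatedCov σ lam M C ≤ algebraMap ℝ A (σ ^ 2 * m + lam ^ 2 * (c * m ^ 2)) := by
  rw [map_add, map_mul _ (σ ^ 2), map_mul _ (lam ^ 2), ← Algebra.smul_def, ← Algebra.smul_def]
  unfold simulatedCov
  gcongr
  exact conjugate_le_algebraMap hM₀ hM hc hC

lemma algebraMap_div_le_simulatedCov (hk : 0 < k) (hlam : lam ^ 2 = t * k)
    (hm : 0 ≤ m) (hM : algebraMap ℝ A (m / k) ≤ M) (hc : 0 ≤ c) (hC : algebraMap ℝ A c ≤ C) :
    algebraMap ℝ A (t * c * m ^ 2 / k) ≤ simulatedCov σ lam M C := by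
  have hrate : t * c * m ^ 2 / k = lam ^ 2 * (c * (m / k) ^ 2) := by
    rw [hlam]
    field_simp
  rw [hrate]
  exact algebraMap_le_simulatedCov (div_nonneg hm hk.le) hM hc hC

lemma simulatedCov_le_algebraMap_div (hk : 0 < k) (hlam : lam ^ 2 = t * k)
    (hσ : σ ^ 2 ≤ s) (hm : 0 ≤ m) (hM₀ : 0 ≤ M) (hM : M ≤ algebraMap ℝ A (m / k)) (hc : 0 ≤ c)
    (hC : C ≤ algebraMap ℝ A c) :
    simulatedCov σ lam M C ≤ algebraMap ℝ A ((s * m + t * c * m ^ 2) / k) := by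
  refine (simulatedCov_le_algebraMap hM₀ hM hc hC).trans (algebraMap_mono A ?_)
  calc σ ^ 2 * (m / k) + lam ^ 2 * (c * (m / k) ^ 2)
      ≤ s * (m / k) + lam ^ 2 * (c * (m / k) ^ 2) := by gcongr
    _ = (s * m + t * c * m ^ 2) / k := by rw [hlam]; field_simp

end SimulatedCov

section WeightedMean

variable {ι κ : Type*} [Fintype ι] [DecidableEq ι]

/-- The average of a prior guess `x₀` with precision `P₀` and of estimates `x k`, `k ∈ I`, with
precisions `P k`. With `P k` the inverse covariances this is the Bayesian posterior mean `θ^n`, and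
the inverted factor is the posterior covariance `Σ_n`. -/
noncomputable def precisionWeightedMean {R : Type*} [CommRing R] (P₀ : Matrix ι ι R) (I : Finset κ)
    (P : κ → Matrix ι ι R) (x₀ : ι → R) (x : κ → ι → R) : ι → R :=
  (P₀ + ∑ k ∈ I, P k)⁻¹ *ᵥ (P₀ *ᵥ x₀ + ∑ k ∈ I, P k *ᵥ x k)

lemma precisionWeightedMean_sub {R : Type*} [CommRing R] {P₀ : Matrix ι ι R} {I : Finset κ}
    {P : κ → Matrix ι ι R} (hP : IsUnit (P₀ + ∑ k ∈ I, P k)) (x₀ y : ι → R) (x : κ → ι → R) :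
    precisionWeightedMean P₀ I P x₀ x - y =
      (P₀ + ∑ k ∈ I, P k)⁻¹ *ᵥ (P₀ *ᵥ (x₀ - y) + ∑ k ∈ I, P k *ᵥ (x k - y)) := by
  have hy : (P₀ + ∑ k ∈ I, P k)⁻¹ *ᵥ ((P₀ + ∑ k ∈ I, P k) *ᵥ y) = y := by
    rw [mulVec_mulVec, nonsing_inv_mul _ ((isUnit_iff_isUnit_det _).1 hP), one_mulVec]
  nth_rewrite 1 [← hy]
  rw [precisionWeightedMean, ← mulVec_sub]
  simp only [mulVec_sub, Finset.sum_sub_distrib, add_mulVec, sum_mulVec, add_sub_add_comm]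

lemma norm_precisionWeightedMean_sub_le {P₀ : Matrix ι ι ℝ} {I : Finset κ}
    {P : κ → Matrix ι ι ℝ} {c : ℝ} (hc : 0 < c) (hP : algebraMap ℝ _ c ≤ P₀ + ∑ k ∈ I, P k)
    (x₀ y : ι → ℝ) (x : κ → ι → ℝ) :
    ‖WithLp.toLp 2 (precisionWeightedMean P₀ I P x₀ x - y)‖ ≤
      c⁻¹ * (‖P₀‖ * ‖WithLp.toLp 2 (x₀ - y)‖ + ∑ k ∈ I, ‖P k‖ * ‖WithLp.toLp 2 (x k - y)‖) := by
  rw [precisionWeightedMean_sub (isUnit_of_algebraMap_le hc hP)]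
  refine (l2_opNorm_mulVec _ (WithLp.toLp 2 _)).trans ?_
  gcongr
  · rw [nonsing_inv_eq_ringInverse]
    exact norm_ringInverse_le hc hP
  · rw [WithLp.toLp_add, WithLp.toLp_sum]
    refine norm_add_le_of_le (l2_opNorm_mulVec _ (WithLp.toLp 2 _)) (norm_sum_le_of_le _ ?_)
    exact fun k _ ↦ l2_opNorm_mulVec _ (WithLp.toLp 2 _)

lemma algebraMap_sum_inv_le_sum_inv {I : Finset κ} {S : κ → Matrix ι ι ℝ} {α β : κ → ℝ}
    (hα : ∀ k ∈ I, 0 < α k) (hαS : ∀ k ∈ I, algebraMap ℝ _ (α k) ≤ S k)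
    (hSβ : ∀ k ∈ I, S k ≤ algebraMap ℝ _ (β k)) :
    algebraMap ℝ _ (∑ k ∈ I, (β k)⁻¹) ≤ ∑ k ∈ I, (S k)⁻¹ := by
  rw [map_sum]
  gcongr with k hk
  rw [nonsing_inv_eq_ringInverse]
  exact algebraMap_inv_le_ringInverse (hα k hk) (hαS k hk) (hSβ k hk)

lemma norm_precisionWeightedMean_inv_sub_le {P₀ : Matrix ι ι ℝ} {I : Finset κ}
    {S : κ → Matrix ι ι ℝ} {α β ε : κ → ℝ} {x₀ y : ι → ℝ} {x : κ → ι → ℝ} (hP₀ : 0 ≤ P₀)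
    (hα : ∀ k ∈ I, 0 < α k) (hβ : 0 < ∑ k ∈ I, (β k)⁻¹)
    (hαS : ∀ k ∈ I, algebraMap ℝ _ (α k) ≤ S k) (hSβ : ∀ k ∈ I, S k ≤ algebraMap ℝ _ (β k))
    (hx : ∀ k ∈ I, ‖WithLp.toLp 2 (x k - y)‖ ≤ ε k) :
    ‖WithLp.toLp 2 (precisionWeightedMean P₀ I (fun k ↦ (S k)⁻¹) x₀ x - y)‖ ≤
      (∑ k ∈ I, (β k)⁻¹)⁻¹ *
        (‖P₀‖ * ‖WithLp.toLp 2 (x₀ - y)‖ + ∑ k ∈ I, (α k)⁻¹ * ε k) := by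
  have hP : algebraMap ℝ _ (∑ k ∈ I, (β k)⁻¹) ≤ P₀ + ∑ k ∈ I, (S k)⁻¹ :=
    (algebraMap_sum_inv_le_sum_inv hα hαS hSβ).trans (le_add_of_nonneg_left hP₀)
  refine (norm_precisionWeightedMean_sub_le hβ hP x₀ y x).trans ?_
  gcongr with k hk
  · exact (inv_pos.2 (hα k hk)).le
  · rw [nonsing_inv_eq_ringInverse]
    exact norm_ringInverse_le (hα k hk) (hαS k hk)
  · exact hx k hk

end WeightedMean

section Sums

variable {m n : ℕ}

lemma sum_Icc_natCast (h : m ≤ n) :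
    ∑ k ∈ Finset.Icc m n, (k : ℝ) = ((n : ℝ) - m + 1) * (n + m) / 2 := by
  induction n, h using Nat.le_induction with
  | base => simp
  | succ n hn ih =>
    rw [Finset.sum_Icc_succ_top (by omega), ih]
    push_cast
    ring

lemma sq_div_four_le_sum_Icc (h : 2 * m ≤ n) :
    (n : ℝ) ^ 2 / 4 ≤ ∑ k ∈ Finset.Icc m n, (k : ℝ) := by
  have hmn : (2 * m : ℝ) ≤ n := by exact_mod_cast h
  rw [sum_Icc_natCast (by omega)]
  nlinarith [(m.cast_nonneg : (0 : ℝ) ≤ m)]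

lemma sum_Icc_sqrt_le (hm : 1 ≤ m) : ∑ k ∈ Finset.Icc m n, √(k : ℝ) ≤ n * √n :=
  calc ∑ k ∈ Finset.Icc m n, √(k : ℝ) ≤ ∑ _k ∈ Finset.Icc m n, √(n : ℝ) := by
        gcongr with k hk
        exact (Finset.mem_Icc.1 hk).2
    _ = ((n + 1 - m : ℕ) : ℝ) * √n := by simp
    _ ≤ n * √n := by gcongr; omega

end Sums

lemma norm_precisionWeightedMean_inv_sub_le_of_rates {ι : Type*} [Fintype ι] [DecidableEq ι]
    {m n : ℕ} (hm : 1 ≤ m) (hmn : 2 * m ≤ n) {α β r : ℝ} (hα : 0 < α) (hβ : 0 < β) (hr : 0 ≤ r)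
    {P₀ : Matrix ι ι ℝ} (hP₀ : 0 ≤ P₀) {S : ℕ → Matrix ι ι ℝ} {x₀ y : ι → ℝ} {x : ℕ → ι → ℝ}
    (hαS : ∀ k ∈ Finset.Icc m n, algebraMap ℝ _ (α / k) ≤ S k)
    (hSβ : ∀ k ∈ Finset.Icc m n, S k ≤ algebraMap ℝ _ (β / k))
    (hx : ∀ k ∈ Finset.Icc m n, ‖WithLp.toLp 2 (x k - y)‖ ≤ r / √k) :
    ‖WithLp.toLp 2 (precisionWeightedMean P₀ (Finset.Icc m n) (fun k ↦ (S k)⁻¹) x₀ x - y)‖ ≤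
      4 * β / α * (r / √n) + 4 * β * ‖P₀‖ * ‖WithLp.toLp 2 (x₀ - y)‖ / n ^ 2 := by
  have hn : (0 : ℝ) < n := by exact_mod_cast (by omega : 0 < n)
  have hαpos : ∀ k ∈ Finset.Icc m n, 0 < α / (k : ℝ) := fun k hk ↦
    div_pos hα (by exact_mod_cast hm.trans (Finset.mem_Icc.1 hk).1)
  have hprec : n ^ 2 / (4 * β) ≤ ∑ k ∈ Finset.Icc m n, (β / (k : ℝ))⁻¹ := by
    simp only [inv_div]
    rw [← Finset.sum_div, ← div_div]
    gcongr
    exact sq_div_four_le_sum_Icc hmn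
  have herr : ∑ k ∈ Finset.Icc m n, (α / (k : ℝ))⁻¹ * (r / √k) ≤ r / α * (n * √n) :=
    calc ∑ k ∈ Finset.Icc m n, (α / (k : ℝ))⁻¹ * (r / √k)
        = r / α * ∑ k ∈ Finset.Icc m n, √(k : ℝ) := by
          rw [Finset.mul_sum]
          refine Finset.sum_congr rfl fun k _ ↦ ?_
          calc (α / (k : ℝ))⁻¹ * (r / √k) = r / α * (k / √k) := by rw [inv_div]; ring
            _ = r / α * √k := by rw [Real.div_sqrt]
      _ ≤ r / α * (n * √n) := by gcongr; exact sum_Icc_sqrt_le hm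
  have hpos : 0 < (n : ℝ) ^ 2 / (4 * β) := by positivity
  calc _ ≤ (∑ k ∈ Finset.Icc m n, (β / (k : ℝ))⁻¹)⁻¹ * (‖P₀‖ * ‖WithLp.toLp 2 (x₀ - y)‖ +
          ∑ k ∈ Finset.Icc m n, (α / (k : ℝ))⁻¹ * (r / √k)) :=
        norm_precisionWeightedMean_inv_sub_le hP₀ hαpos (hpos.trans_le hprec) hαS hSβ hx
    _ ≤ (n ^ 2 / (4 * β))⁻¹ * (‖P₀‖ * ‖WithLp.toLp 2 (x₀ - y)‖ + r / α * (n * √n)) := by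
        gcongr
    _ = 4 * β / α * (r * (√n / n)) + 4 * β * ‖P₀‖ * ‖WithLp.toLp 2 (x₀ - y)‖ / n ^ 2 := by
        field_simp
        ring
    _ = _ := by rw [Real.sqrt_div_self', mul_one_div]

lemma norm_precisionWeightedMean_simulatedCov_sub_le {ι : Type*} [Fintype ι] [DecidableEq ι]
    {N n : ℕ} (hN : 1 ≤ N) (hn : 2 * N ≤ n) {σ τ γ κ r m₁ m₂ c₁ c₂ : ℝ} (hτ : 0 < τ)
    (hγ : 0 < γ) (hκ : 0 ≤ κ) (hr : 0 ≤ r) (hm₁ : 0 < m₁) (hm₂ : 0 < m₂) (hc₁ : 0 < c₁)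
    (hc₂ : 0 < c₂) (hσ : σ ^ 2 ≤ κ * τ) {lam : ℕ → ℝ} {P₀ : Matrix ι ι ℝ} {M C : ℕ → Matrix ι ι ℝ}
    {x₀ y : ι → ℝ} {x : ℕ → ι → ℝ} (hlam : ∀ k ∈ Finset.Icc N n, lam k ^ 2 = γ * τ * k)
    (hP₀ : 0 ≤ P₀) (hx : ∀ k ∈ Finset.Icc N n, ‖WithLp.toLp 2 (x k - y)‖ ≤ r / √k)
    (hM : ∀ k ∈ Finset.Icc N n, algebraMap ℝ _ (m₁ / k) ≤ M k ∧ M k ≤ algebraMap ℝ _ (m₂ / k))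
    (hC : ∀ k ∈ Finset.Icc N n, algebraMap ℝ _ c₁ ≤ C k ∧ C k ≤ algebraMap ℝ _ c₂) :
    ‖WithLp.toLp 2 (precisionWeightedMean P₀ (Finset.Icc N n)
        (fun k ↦ (simulatedCov σ (lam k) (M k) (C k))⁻¹) x₀ x - y)‖ ≤
      4 * ((κ * m₂ + γ * c₂ * m₂ ^ 2) / (γ * c₁ * m₁ ^ 2)) * (r / √n) +
        4 * (κ * m₂ + γ * c₂ * m₂ ^ 2) * τ * ‖P₀‖ * ‖WithLp.toLp 2 (x₀ - y)‖ / n ^ 2 := by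
  have hpos : ∀ k ∈ Finset.Icc N n, (0 : ℝ) < k := fun k hk ↦ by
    exact_mod_cast hN.trans (Finset.mem_Icc.1 hk).1
  have hM₀ : ∀ k ∈ Finset.Icc N n, 0 ≤ M k := fun k hk ↦
    (algebraMap_nonneg _ (div_nonneg hm₁.le (hpos k hk).le)).trans (hM k hk).1
  have hlower : ∀ k ∈ Finset.Icc N n, algebraMap ℝ _ (γ * τ * c₁ * m₁ ^ 2 / k) ≤
      simulatedCov σ (lam k) (M k) (C k) := fun k hk ↦
    algebraMap_div_le_simulatedCov (hpos k hk) (hlam k hk) hm₁.le (hM k hk).1 hc₁.le (hC k hk).1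
  have hupper : ∀ k ∈ Finset.Icc N n, simulatedCov σ (lam k) (M k) (C k) ≤
      algebraMap ℝ _ ((κ * τ * m₂ + γ * τ * c₂ * m₂ ^ 2) / k) := fun k hk ↦
    simulatedCov_le_algebraMap_div (hpos k hk) (hlam k hk) hσ hm₂.le (hM₀ k hk) (hM k hk).2
      hc₂.le (hC k hk).2
  refine (norm_precisionWeightedMean_inv_sub_le_of_rates hN hn (by positivity) (by positivity) hr
    hP₀ hlower hupper hx).trans_eq ?_
  field_simp

theorem stmt8_general (C6 C7 C8 Cmin Cmax clam : ℝ) (hC6 : 0 < C6) (hC7 : 0 < C7) (hC8 : 0 < C8)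
    (hCmin : 0 < Cmin) (hCmax : 0 < Cmax) (hclam : 0 < clam) :
    ∃ K1 K2 : ℝ, 0 < K1 ∧ 0 < K2 ∧
      ∀ (ι : Type*) [Fintype ι] [DecidableEq ι] (N' n p : ℕ) (σ dbar sstar : ℝ)
        (θ θprior : ι → ℝ) (P₀ : Matrix ι ι ℝ) (θhat : ℕ → ι → ℝ) (M C : ℕ → Matrix ι ι ℝ),
        1 ≤ N' → 2 * N' ≤ n → 2 ≤ p → 0 < σ → 1 ≤ dbar → 0 ≤ sstar → 0 ≤ P₀ →
        (∀ k ∈ Finset.Icc N' n,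
          ‖WithLp.toLp 2 (θhat k - θ)‖ ≤ C6 * σ * dbar * √(sstar * Real.log p / k)) →
        (∀ k ∈ Finset.Icc N' n,
          algebraMap ℝ _ (C8 / k) ≤ M k ∧ M k ≤ algebraMap ℝ _ (C7 / k)) →
        (∀ k ∈ Finset.Icc N' n, algebraMap ℝ _ Cmin ≤ C k ∧ C k ≤ algebraMap ℝ _ Cmax) →
        ‖WithLp.toLp 2 (precisionWeightedMean P₀ (Finset.Icc N' n)
            (fun k ↦ (simulatedCov σ (clam * σ * dbar * √(k * Real.log p)) (M k) (C k))⁻¹)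
            θprior θhat - θ)‖ ≤
          K1 * σ * dbar * √(sstar * Real.log p / n) +
            K2 * σ ^ 2 * dbar ^ 2 * Real.log p * ‖P₀‖ * ‖WithLp.toLp 2 (θprior - θ)‖ / n ^ 2 := by
  have hlog2 : 0 < Real.log 2 := Real.log_pos one_lt_two
  set b := 1 / Real.log 2 * C7 + clam ^ 2 * Cmax * C7 ^ 2
  refine ⟨4 * (b / (clam ^ 2 * Cmin * C8 ^ 2)) * C6, 4 * b, by positivity, by positivity, ?_⟩
  intro ι _ _ N' n p σ dbar sstar θ θprior P₀ θhat M C hN' hn hp hσ hdbar hsstar hP₀ hθ hM hC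
  have hL : Real.log 2 ≤ Real.log p := Real.log_le_log two_pos (by exact_mod_cast hp)
  set L := Real.log p
  have hL₀ : 0 < L := hlog2.trans_le hL
  have hσ_le : σ ^ 2 ≤ 1 / Real.log 2 * (σ ^ 2 * dbar ^ 2 * L) :=
    calc σ ^ 2 = 1 / Real.log 2 * (σ ^ 2 * 1 ^ 2 * Real.log 2) := by field_simp
      _ ≤ 1 / Real.log 2 * (σ ^ 2 * dbar ^ 2 * L) := by gcongr
  have hlam : ∀ k ∈ Finset.Icc N' n,
      (clam * σ * dbar * √(k * L)) ^ 2 = clam ^ 2 * (σ ^ 2 * dbar ^ 2 * L) * k := fun k _ ↦ by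
    rw [mul_pow, Real.sq_sqrt (by positivity)]
    ring
  have hsqrt (k : ℕ) : √(sstar * L / k) = √(sstar * L) / √k := Real.sqrt_div (by positivity) _
  simp only [hsqrt, ← mul_div_assoc (C6 * σ * dbar)] at hθ
  refine (norm_precisionWeightedMean_simulatedCov_sub_le hN' hn (by positivity) (by positivity)
    (by positivity) (by positivity) hC8 hC7 hCmin hCmax hσ_le hlam hP₀ hθ hM hC).trans_eq ?_
  rw [hsqrt]
  ring

section QuadraticForms

variable {ι : Type*} [Fintype ι] {M N : Matrix ι ι ℝ}

lemma le_iff_dotProduct_mulVec_le (hM : M.IsSymm) (hN : N.IsSymm) :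
    M ≤ N ↔ ∀ v, v ⬝ᵥ M *ᵥ v ≤ v ⬝ᵥ N *ᵥ v := by
  have hNM : (N - M).IsHermitian := isHermitian_iff_isSymm.2 (hN.sub hM)
  simp only [Matrix.le_iff, posSemidef_iff_dotProduct_mulVec, hNM, true_and, sub_mulVec,
    dotProduct_sub, sub_nonneg, star_trivial]

variable [DecidableEq ι]

lemma dotProduct_algebraMap_mulVec (c : ℝ) (v : ι → ℝ) :
    v ⬝ᵥ algebraMap ℝ (Matrix ι ι ℝ) c *ᵥ v = c * ∑ i, v i ^ 2 := by
  rw [Algebra.algebraMap_eq_smul_one, smul_mulVec, one_mulVec, dotProduct_smul, smul_eq_mul]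
  simp only [dotProduct, sq]

lemma algebraMap_le_and_le_algebraMap_iff {c₁ c₂ : ℝ} (hM : M.IsSymm) :
    algebraMap ℝ _ c₁ ≤ M ∧ M ≤ algebraMap ℝ _ c₂ ↔
      ∀ v : ι → ℝ, c₁ * ∑ i, v i ^ 2 ≤ v ⬝ᵥ M *ᵥ v ∧ v ⬝ᵥ M *ᵥ v ≤ c₂ * ∑ i, v i ^ 2 := by
  have hsymm (c : ℝ) : (algebraMap ℝ (Matrix ι ι ℝ) c).IsSymm := isSymm_diagonal _
  rw [le_iff_dotProduct_mulVec_le (hsymm c₁) hM, le_iff_dotProduct_mulVec_le hM (hsymm c₂)]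
  simp only [dotProduct_algebraMap_mulVec, forall_and]

end QuadraticForms

section EuclideanNorms

variable {d : ℕ}

lemma vecNorm_eq_norm (v : Fin d → ℝ) : vecNorm v = ‖WithLp.toLp 2 v‖ := by
  simp [vecNorm, EuclideanSpace.norm_eq]

lemma opNorm2_eq_norm (M : Matrix (Fin d) (Fin d) ℝ) : opNorm2 M = ‖M‖ := by
  rw [← l2_opNorm_toEuclideanCLM, ← ContinuousLinearMap.sSup_sphere_eq_norm, opNorm2]
  congr 1 with t
  constructor
  · rintro ⟨ν, hν, rfl⟩
    refine ⟨WithLp.toLp 2 ν, ?_, ?_⟩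
    · simp [← vecNorm_eq_norm, vecNorm, hν]
    · simp [vecNorm_eq_norm]
  · rintro ⟨ν, hν, rfl⟩
    refine ⟨ν.ofLp, ?_, ?_⟩
    · rw [mem_sphere_zero_iff_norm, EuclideanSpace.norm_eq, Real.sqrt_eq_one] at hν
      simpa using hν
    · rw [vecNorm_eq_norm]
      rfl

end EuclideanNorms

/-- **Deterministic core of Theorem 1, part (2)** (appendix proof): given group-Lasso
estimates `θ̂^{n'}` with error `≤ C₆ σ d̄ √(s* log p / n')`, matrices `M_{n'}` and `C_{n'}`
with the stated two-sided eigenvalue bounds, simulated covariances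
`Σ̂_{n'} = σ²M_{n'} + λ_{n'}² M_{n'} C_{n'} M_{n'}` with `λ_{n'} = c_λ σ d̄ √(n' log p)`,
and the precision-weighted posterior mean
`θ^n = Σ_n [Σ₀⁻¹ θ^{N'−1} + Σ_{n'} Σ̂_{n'}⁻¹ θ̂^{n'}]`,
`Σ_n = [Σ₀⁻¹ + Σ_{n'} Σ̂_{n'}⁻¹]⁻¹`, there are constants `K₁, K₂ > 0` depending only on
`(C₆, C₇, C₈, C_min, C_max, c_λ)` such that
`‖θ^n − θ‖₂ ≤ K₁ σ d̄ √(s* log p / n) + K₂ σ² d̄² (log p) ‖Σ₀⁻¹‖₂ ‖θ^{N'−1} − θ‖₂ / n²`. -/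
theorem stmt8 :
    ∀ C6 C7 C8 Cmin Cmax clam : ℝ,
      0 < C6 → 0 < C7 → 0 < C8 → 0 < Cmin → 0 < Cmax → 0 < clam →
      ∃ K1 K2 : ℝ, 0 < K1 ∧ 0 < K2 ∧
        ∀ (N' n p : ℕ) (σ dbar sstar : ℝ) (D : ℕ)
          (θ θprior : Fin D → ℝ) (Sigma0 : Matrix (Fin D) (Fin D) ℝ)
          (θhat : ℕ → Fin D → ℝ) (M C : ℕ → Matrix (Fin D) (Fin D) ℝ),
          1 ≤ N' → 2 * N' ≤ n → 3 ≤ p → 0 < σ → 1 ≤ dbar → 1 ≤ sstar →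
          Sigma0.PosDef →
          (∀ n' ∈ Finset.Icc N' n,
            vecNorm (fun i => θhat n' i - θ i) ≤
              C6 * σ * dbar * Real.sqrt (sstar * Real.log p / (n' : ℝ))) →
          (∀ n' ∈ Finset.Icc N' n, (M n').IsSymm ∧
            ∀ ν : Fin D → ℝ,
              (C8 / (n' : ℝ)) * ∑ k, ν k ^ 2 ≤ ν ⬝ᵥ (M n').mulVec ν ∧
              ν ⬝ᵥ (M n').mulVec ν ≤ (C7 / (n' : ℝ)) * ∑ k, ν k ^ 2) →
          (∀ n' ∈ Finset.Icc N' n, (C n').IsSymm ∧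
            ∀ ν : Fin D → ℝ,
              Cmin * ∑ k, ν k ^ 2 ≤ ν ⬝ᵥ (C n').mulVec ν ∧
              ν ⬝ᵥ (C n').mulVec ν ≤ Cmax * ∑ k, ν k ^ 2) →
          ∀ Sigmahat : ℕ → Matrix (Fin D) (Fin D) ℝ,
            (∀ n' : ℕ, Sigmahat n' =
              σ ^ 2 • M n' +
                (clam * σ * dbar * Real.sqrt ((n' : ℝ) * Real.log p)) ^ 2 •
                  (M n' * C n' * M n')) →
          ∀ Sigmapost : Matrix (Fin D) (Fin D) ℝ,
            Sigmapost = (Sigma0⁻¹ + ∑ n' ∈ Finset.Icc N' n, (Sigmahat n')⁻¹)⁻¹ →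
          ∀ θpost : Fin D → ℝ,
            θpost = Sigmapost.mulVec
              (Sigma0⁻¹.mulVec θprior +
                ∑ n' ∈ Finset.Icc N' n, ((Sigmahat n')⁻¹).mulVec (θhat n')) →
          vecNorm (fun i => θpost i - θ i) ≤
            K1 * σ * dbar * Real.sqrt (sstar * Real.log p / (n : ℝ)) +
              K2 * σ ^ 2 * dbar ^ 2 * Real.log p * opNorm2 Sigma0⁻¹ *
                vecNorm (fun i => θprior i - θ i) / (n : ℝ) ^ 2 := by
  intro C6 C7 C8 Cmin Cmax clam hC6 hC7 hC8 hCmin hCmax hclam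
  obtain ⟨K1, K2, hK1, hK2, hK⟩ :=
    stmt8_general C6 C7 C8 Cmin Cmax clam hC6 hC7 hC8 hCmin hCmax hclam
  refine ⟨K1, K2, hK1, hK2, ?_⟩
  rintro N' n p σ dbar sstar D θ θprior Sigma0 θhat M C hN' hn hp hσ hdbar hsstar hSigma0 hθ hM hC
    Sigmahat hSigmahat _ rfl _ rfl
  obtain rfl := funext hSigmahat
  simp only [vecNorm_eq_norm, opNorm2_eq_norm] at hθ ⊢
  exact hK (Fin D) N' n p σ dbar sstar θ θprior Sigma0⁻¹ θhat M C hN' hn (by omega) hσ hdbar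
    (by linarith) hSigma0.inv.posSemidef.nonneg hθ
    (fun k hk ↦ (algebraMap_le_and_le_algebraMap_iff (hM k hk).1).2 (hM k hk).2)
    (fun k hk ↦ (algebraMap_le_and_le_algebraMap_iff (hC k hk).1).2 (hC k hk).2)
end
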